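/- For every m = 2^k with k ≥ 1 and every i with (3/2)m < i ≤ 4m, the following periodicity relations hold for the period-doubling sequence: w_i^(m) = w_{i−m/2}^(m) if (3/2)m < i ≤ 2m; w_i^(m) = w_{i−2m}^(m) if 2m < i ≤ 3m; and w_i^(m) = w_{i−3m}^(m) if 3m < i ≤ 4m. -/

import Mathlib

/-!
Adding a multiple of `n = 2 ^ k` does not change the 2-adic valuation of a number that is not a
multiple of `n` (`pd_add_mul_pow`). Hence a word and its translate by a multiple of `n` agree as
soon as they agree at the multiples of `n` they cover (`wordAt_eq_of_multiples`).

In the first relation take `n = m / 2`: the later word lies strictly between `3n` and `6n`, so only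
the pairs `(4n, 3n)` and `(5n, 4n)` matter. In the other two take `n = m`: the later word lies
strictly between `2m` and `4m`, resp. `3m` and `5m`, leaving the pair `(3m, m)`, resp. `(4m, m)`.
All of these agree because multiplication by an odd number or by `4` preserves the parity of the
valuation.
-/

open Filter Topology

/-- The period-doubling sequence (1-based): `pd i = k_i mod 2` where `k_i` is the
largest `k` such that `2^k` divides `i`. -/
def pd (i : ℕ) : ℕ := padicValNat 2 i % 2

/-- The `m`-word `w_i^(m) = ω_i ω_{i+1} ⋯ ω_{i+m-1}` of the period-doubling sequence. -/
def wordAt (i m : ℕ) : List ℕ := (List.range m).map (fun h => pd (i + h))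

/-- An `m`-word is allowed if it occurs in the period-doubling sequence. -/
def Allowed (m : ℕ) (v : List ℕ) : Prop := ∃ i, 1 ≤ i ∧ wordAt i m = v

/-- The complexity function of the period-doubling sequence. -/
noncomputable def pdComplexity (m : ℕ) : ℕ := Set.ncard {v | Allowed m v}

/-- `HasFreq m v c`: the frequency of the `m`-word `v` in the period-doubling
sequence exists and equals `c`. -/
def HasFreq (m : ℕ) (v : List ℕ) (c : ℝ) : Prop :=
  Tendsto (fun n : ℕ => (((Finset.Icc 1 n).filter (fun i => wordAt i m = v)).card : ℝ) / n)
    atTop (𝓝 c)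

open Classical in
/-- The correlation sum `C(ω, n, m)` of the period-doubling sequence, for a distance
threshold `ε` with `2^{-m} ≤ ε < 2^{-m+1}`. -/
noncomputable def corrSum (n m : ℕ) : ℝ :=
  (((Finset.range n ×ˢ Finset.range n).filter
      (fun p : ℕ × ℕ => ∀ h ∈ Finset.Icc 1 m, pd (p.1 + h) = pd (p.2 + h))).card : ℝ) / (n : ℝ) ^ 2

/-- The period-doubling substitution `ζ(0) = 01`, `ζ(1) = 00`, extended to a morphism
on finite words. -/
def substWord (w : List ℕ) : List ℕ := (w.map (fun a => if a = 0 then [0, 1] else [0, 0])).flatten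

/-- The period-doubling substitution acting on one-sided infinite sequences
(0-based indexing). -/
def substSeq (x : ℕ → ℕ) : ℕ → ℕ := fun n =>
  if n % 2 = 0 then 0 else if x (n / 2) = 0 then 1 else 0

theorem pd_two_mul {j : ℕ} (hj : j ≠ 0) : pd (2 * j) = 1 - pd j := by
  have h := padicValNat.mul (p := 2) (two_ne_zero) hj
  rw [padicValNat_self] at h
  unfold pd
  omega

theorem pd_odd (j : ℕ) : pd (2 * j + 1) = 0 := by
  unfold pd
  rw [padicValNat.eq_zero_of_not_dvd (by omega)]

/-- A number that is not a multiple of `2 ^ k` keeps its 2-adic valuation, hence its value under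
`pd`, when a multiple of `2 ^ k` is added; the induction on `k` halves even numbers. -/
theorem pd_add_mul_pow (k c : ℕ) : ∀ j : ℕ, ¬ 2 ^ k ∣ j → pd (j + c * 2 ^ k) = pd j := by
  induction k with
  | zero => intro j hj; simp at hj
  | succ k ih =>
    intro j hj
    obtain ⟨r, rfl | rfl⟩ := Nat.even_or_odd' j
    · have hr : ¬ 2 ^ k ∣ r := fun h => hj (by rw [pow_succ']; exact Nat.mul_dvd_mul_left 2 h)
      have hr0 : r ≠ 0 := by rintro rfl; exact hr (dvd_zero _)
      rw [show 2 * r + c * 2 ^ (k + 1) = 2 * (r + c * 2 ^ k) by ring,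
        pd_two_mul (by omega), pd_two_mul hr0, ih r hr]
    · rw [show 2 * r + 1 + c * 2 ^ (k + 1) = 2 * (r + c * 2 ^ k) + 1 by ring, pd_odd, pd_odd]

theorem pd_odd_mul_pow (k r : ℕ) : pd ((2 * r + 1) * 2 ^ k) = pd (2 ^ k) := by
  unfold pd
  rw [padicValNat.mul (by omega) (by positivity), padicValNat.eq_zero_of_not_dvd (by omega),
    zero_add]

theorem pd_four_mul_pow (k : ℕ) : pd (4 * 2 ^ k) = pd (2 ^ k) := by
  unfold pd
  rw [show 4 * 2 ^ k = 2 ^ (k + 2) by ring, padicValNat.prime_pow, padicValNat.prime_pow]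
  omega

/-- Translation by `c * 2 ^ k` identifies two words as soon as it respects `pd` at the
multiples of `2 ^ k` that the later word covers. -/
theorem wordAt_eq_of_multiples {k c i m : ℕ} (hi : c * 2 ^ k < i)
    (h : ∀ q, i ≤ (q + c) * 2 ^ k → (q + c) * 2 ^ k < i + m →
      pd ((q + c) * 2 ^ k) = pd (q * 2 ^ k)) :
    wordAt i m = wordAt (i - c * 2 ^ k) m := by
  unfold wordAt
  refine List.map_congr_left fun t ht => ?_
  rw [List.mem_range] at ht
  obtain ⟨j, hj⟩ : ∃ j, i + t = j + c * 2 ^ k := ⟨i + t - c * 2 ^ k, by omega⟩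
  rw [show i - c * 2 ^ k + t = j by omega, hj]
  by_cases hd : 2 ^ k ∣ j
  · obtain ⟨q, rfl⟩ := hd
    rw [mul_comm (2 ^ k) q, ← add_mul] at *
    exact h q (by omega) (by omega)
  · exact pd_add_mul_pow k c j hd

theorem pd_word_periodicity (k m i : ℕ) (hk : 1 ≤ k) (hm : m = 2 ^ k) :
    (3 * m / 2 < i → i ≤ 2 * m → wordAt i m = wordAt (i - m / 2) m) ∧
    (2 * m < i → i ≤ 3 * m → wordAt i m = wordAt (i - 2 * m) m) ∧
    (3 * m < i → i ≤ 4 * m → wordAt i m = wordAt (i - 3 * m) m) := by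
  refine ⟨fun h1 h2 => ?_, fun h1 h2 => ?_, fun h1 h2 => ?_⟩
  · obtain ⟨l, rfl⟩ : ∃ l, k = l + 1 := ⟨k - 1, by omega⟩
    rw [pow_succ] at hm
    have hhalf : m / 2 = 1 * 2 ^ l := by omega
    rw [hhalf]
    refine wordAt_eq_of_multiples (by omega) fun q hq1 hq2 => ?_
    have hlo : 3 < q + 1 := lt_of_mul_lt_mul_right (a := 2 ^ l) (by omega) (Nat.zero_le _)
    have hhi : q + 1 < 6 := lt_of_mul_lt_mul_right (a := 2 ^ l) (by omega) (Nat.zero_le _)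
    obtain rfl | rfl : q = 3 ∨ q = 4 := by omega
    · exact (pd_four_mul_pow l).trans (pd_odd_mul_pow l 1).symm
    · exact (pd_odd_mul_pow l 2).trans (pd_four_mul_pow l).symm
  · subst hm
    refine wordAt_eq_of_multiples h1 fun q hq1 hq2 => ?_
    have hlo : 2 < q + 2 := lt_of_mul_lt_mul_right (a := 2 ^ k) (by omega) (Nat.zero_le _)
    have hhi : q + 2 < 4 := lt_of_mul_lt_mul_right (a := 2 ^ k) (by omega) (Nat.zero_le _)
    obtain rfl : q = 1 := by omega
    rw [one_mul]
    exact pd_odd_mul_pow k 1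
  · subst hm
    refine wordAt_eq_of_multiples h1 fun q hq1 hq2 => ?_
    have hlo : 3 < q + 3 := lt_of_mul_lt_mul_right (a := 2 ^ k) (by omega) (Nat.zero_le _)
    have hhi : q + 3 < 5 := lt_of_mul_lt_mul_right (a := 2 ^ k) (by omega) (Nat.zero_le _)
    obtain rfl : q = 1 := by omega
    rw [one_mul]
    exact pd_four_mul_pow k
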